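/- Let m be odd and q = 2^m. Define f(x,y,z) = x³ + y³ + x²z + xy² + yz² over F_q, and F : F_q³ → F_q³ by F(x,y,z) = (f(x,y,z), f(y,z,x), f(z,x,y)). Then F is a bijection of F_q³. -/

import Mathlib

def f3 {F : Type*} [Field F] (x y z : F) : F := x ^ 3 + y ^ 3 + x ^ 2 * z + x * y ^ 2 + y * z ^ 2

lemma no_root {F : Type*} [Field F] [Fintype F] (m : ℕ) (hm : Odd m)
    (hF : Fintype.card F = 2 ^ m) (w : F) (hw : w ^ 2 + w + 1 = 0) (h2 : (2 : F) = 0) : False := by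
  have h3 : w ^ 3 = 1 := by linear_combination (w - 1) * hw
  have hq : w ^ (2 ^ m) = w := by rw [← hF]; exact FiniteField.pow_card w
  obtain ⟨k, rfl⟩ := hm
  have h4 : ∀ j : ℕ, 2 ^ (2 * j + 1) % 3 = 2 := by
    intro j
    induction j with
    | zero => rfl
    | succ j ih =>
      rw [show 2 * (j + 1) + 1 = (2 * j + 1) + 2 by ring, pow_add]
      omega
  have h5 : 2 ^ (2 * k + 1) = 3 * (2 ^ (2 * k + 1) / 3) + 2 := by
    have := h4 k
    omega
  rw [h5, pow_add, pow_mul, h3, one_pow, one_mul] at hq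
  have : (1 : F) = 0 := by linear_combination hw - hq - w * h2
  exact one_ne_zero this

lemma key {F : Type*} [Field F] (h2 : (2 : F) = 0)
    (nr : ∀ w : F, w ^ 2 + w + 1 = 0 → False)
    (x y z X Y Z p q r s : F)
    (hB1 : f3 (X + x) (Y + y) (Z + z) = f3 X Y Z)
    (hB2 : f3 (Y + y) (Z + z) (X + x) = f3 Y Z X)
    (hB3 : f3 (Z + z) (X + x) (Y + y) = f3 Z X Y)
    (hs : p + q + r = 0)
    (hX : (p * x ^ 2 + s * y ^ 2) ^ 2 = p * x + s * z)
    (hY : (q * y ^ 2 + s * z ^ 2) ^ 2 = q * y + s * x)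
    (hZ : (r * z ^ 2 + s * x ^ 2) ^ 2 = r * z + s * y)
    (h1 : p * x ^ 3 + q * y ^ 3 + r * z ^ 3 + s * (x * y ^ 2 + y * z ^ 2 + z * x ^ 2) = 1) :
    False := by
  apply nr ((p * x ^ 2 + s * y ^ 2) * X + (q * y ^ 2 + s * z ^ 2) * Y + (r * z ^ 2 + s * x ^ 2) * Z)
  have : CharP F 2 := CharTwo.of_one_ne_zero_of_two_eq_zero one_ne_zero h2
  have hw : ((p * x ^ 2 + s * y ^ 2) * X + (q * y ^ 2 + s * z ^ 2) * Y
      + (r * z ^ 2 + s * x ^ 2) * Z) ^ 2 =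
      (p * x + s * z) * X ^ 2 + (q * y + s * x) * Y ^ 2 + (r * z + s * y) * Z ^ 2 := by
    rw [CharTwo.add_sq, CharTwo.add_sq, mul_pow, mul_pow, mul_pow, hX, hY, hZ]
  rw [hw, ← h1]
  have hr : r = p + q := by
    linear_combination hs - (p + q) * h2
  subst hr
  unfold f3 at hB1 hB2 hB3
  grind

lemma inj0 {F : Type*} [Field F] (h2 : (2 : F) = 0)
    (nr : ∀ w : F, w ^ 2 + w + 1 = 0 → False)
    (x y z X Y Z : F)
    (hB1 : f3 (X + x) (Y + y) (Z + z) = f3 X Y Z)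
    (hB2 : f3 (Y + y) (Z + z) (X + x) = f3 Y Z X)
    (hB3 : f3 (Z + z) (X + x) (Y + y) = f3 Z X Y) : x = 0 ∧ y = 0 ∧ z = 0 := by
  have : CharP F 2 := CharTwo.of_one_ne_zero_of_two_eq_zero one_ne_zero h2
  by_cases hU : x ^ 2 * y + y ^ 2 * z + z ^ 2 * x = 0
  swap
  · exfalso
    set U := x ^ 2 * y + y ^ 2 * z + z ^ 2 * x with hUd
    refine key h2 nr x y z X Y Z ((x * y ^ 2 + y * z ^ 2) / U ^ 2)
      ((y * z ^ 2 + z * x ^ 2) / U ^ 2) ((z * x ^ 2 + x * y ^ 2) / U ^ 2) (x * y * z / U ^ 2)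
      hB1 hB2 hB3 ?_ ?_ ?_ ?_ ?_
    · field_simp; grind
    · field_simp; grind
    · field_simp; grind
    · field_simp; grind
    · field_simp; grind
  have sing : ∀ x X Y Z : F, x ≠ 0 → f3 (X + x) Y Z = f3 X Y Z →
      f3 Y Z (X + x) = f3 Y Z X → f3 Z (X + x) Y = f3 Z X Y → False := by
    intro x X Y Z hx h1 h2' h3
    refine key h2 nr x 0 0 X Y Z (1 / x ^ 3) (1 / x ^ 3) 0 0
      (by simpa using h1) (by simpa using h2') (by simpa using h3) ?_ ?_ ?_ ?_ ?_
    · grind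
    · field_simp; grind
    · simp
    · simp
    · field_simp; grind
  by_cases hx : x = 0
  · subst hx
    have : y = 0 ∨ z = 0 := by grind
    rcases this with rfl | rfl
    · refine ⟨rfl, rfl, ?_⟩
      by_contra hz
      simp only [add_zero] at hB1 hB2 hB3
      exact sing z Z X Y hz hB3 hB1 hB2
    · refine ⟨rfl, ?_, rfl⟩
      by_contra hy
      simp only [add_zero] at hB1 hB2 hB3
      exact sing y Y Z X hy hB2 hB3 hB1
  by_cases hy : y = 0
  · subst hy
    have hz : z = 0 := by grind
    subst hz
    simp only [add_zero] at hB1 hB2 hB3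
    exact (sing x X Y Z hx hB1 hB2 hB3).elim
  by_cases hz : z = 0
  · grind
  exfalso
  have hxy : x ≠ y := by
    rintro rfl
    apply nr (z / x)
    field_simp
    grind
  have hG : x ^ 3 + y ^ 3 ≠ 0 := by
    intro h
    apply nr (y / x)
    field_simp
    have : (x + y) * (y ^ 2 + y * x + x ^ 2) = 0 := by grind
    rcases mul_eq_zero.1 this with h | h
    · grind
    · linear_combination h
  obtain ⟨g, hg⟩ : ∃ g, g * (x ^ 3 + y ^ 3) = 1 := ⟨_, inv_mul_cancel₀ hG⟩
  obtain ⟨t, ht⟩ : ∃ t, t = x ^ 2 * z * g ^ 2 := ⟨_, rfl⟩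
  obtain ⟨k, hk⟩ : ∃ k, k = x ^ 3 * g + t * (x ^ 2 * y) := ⟨_, rfl⟩
  obtain ⟨l, hl⟩ : ∃ l, l = y ^ 3 * g + t * (y ^ 2 * z) := ⟨_, rfl⟩
  obtain ⟨n, hn⟩ : ∃ n, n = t * (z ^ 2 * x) := ⟨_, rfl⟩
  obtain ⟨s, hs⟩ : ∃ s, s = x * y * z * t ^ 2 + x ^ 2 * y * g ^ 2 := ⟨_, rfl⟩
  have e1 : k + l + n = 1 := by linear_combination hk + hl + hn + hg + t * hU
  have ek : k ^ 2 + k = s * (x * y ^ 2 + z * x ^ 2) := by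
    have e0 : (x ^ 3 * g) ^ 2 + x ^ 3 * g = x ^ 3 * y ^ 3 * g ^ 2 := by
      linear_combination (-x ^ 3 * g) * hg + x ^ 6 * g ^ 2 * h2
    have e2 : t * (x ^ 2 * y) = x ^ 4 * y * z * g ^ 2 := by rw [ht]; ring
    linear_combination (k + x ^ 3 * g + t * (x ^ 2 * y) + 1) * hk - (x * y ^ 2 + z * x ^ 2) * hs
      + e0 + e2 + t ^ 2 * x ^ 2 * y * hU
      + (x ^ 3 * g * t * (x ^ 2 * y) - t ^ 2 * x ^ 2 * y * (y ^ 2 * z + z ^ 2 * x)) * h2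
  have el : l ^ 2 + l = s * (y * z ^ 2 + x * y ^ 2) := by
    have e0 : (y ^ 3 * g) ^ 2 + y ^ 3 * g = x ^ 3 * y ^ 3 * g ^ 2 := by
      linear_combination (-y ^ 3 * g) * hg + y ^ 6 * g ^ 2 * h2
    have e2 : t * (y ^ 2 * z) = x ^ 2 * y ^ 2 * z ^ 2 * g ^ 2 := by rw [ht]; ring
    linear_combination (l + y ^ 3 * g + t * (y ^ 2 * z) + 1) * hl - (y * z ^ 2 + x * y ^ 2) * hs
      + e0 + e2 + t ^ 2 * y ^ 2 * z * hU
      + (y ^ 3 * g * t * (y ^ 2 * z) - t ^ 2 * y ^ 2 * z * (x ^ 2 * y + z ^ 2 * x)) * h2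
  have en : n ^ 2 + n = s * (z * x ^ 2 + y * z ^ 2) := by
    have e2 : t * (z ^ 2 * x) = x ^ 3 * z ^ 3 * g ^ 2 := by rw [ht]; ring
    linear_combination (n + t * (z ^ 2 * x) + 1) * hn - (z * x ^ 2 + y * z ^ 2) * hs
      + e2 + t ^ 2 * z ^ 2 * x * hU - x ^ 2 * z * g ^ 2 * hU + x ^ 3 * z ^ 3 * g ^ 2 * h2
      + (- t ^ 2 * z ^ 2 * x * (x ^ 2 * y + y ^ 2 * z)) * h2
  refine key h2 nr x y z X Y Z ((k + s * (x * y ^ 2)) / x ^ 3)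
      ((l + s * (y * z ^ 2)) / y ^ 3) ((n + s * (z * x ^ 2)) / z ^ 3) s
      hB1 hB2 hB3 ?_ ?_ ?_ ?_ ?_
  · have d0 : y / x + z / y + x / z = 0 := by
      field_simp
      linear_combination hU
    have d2 : (y / x) ^ 2 + (z / y) ^ 2 + (x / z) ^ 2 = 0 := by
      rw [← CharTwo.add_sq, ← CharTwo.add_sq, d0]; ring
    have p1 : (k + s * (x * y ^ 2)) / x ^ 3 = g + t * (y / x) + s * (y / x) ^ 2 := by
      rw [hk]; field_simp
    have p2 : (l + s * (y * z ^ 2)) / y ^ 3 = g + t * (z / y) + s * (z / y) ^ 2 := by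
      rw [hl]; field_simp
    have p3 : (n + s * (z * x ^ 2)) / z ^ 3 = t * (x / z) + s * (x / z) ^ 2 := by
      rw [hn]; field_simp
    rw [p1, p2, p3]
    linear_combination t * d0 + s * d2 + g * h2
  · field_simp; grind
  · field_simp; grind
  · field_simp; grind
  · field_simp; grind

theorem stmt_3 (m : ℕ) (hm : Odd m) {F : Type*} [Field F] [Fintype F]
    (hF : Fintype.card F = 2 ^ m) :
    Function.Bijective (fun p : F × F × F =>
      (f3 p.1 p.2.1 p.2.2, f3 p.2.1 p.2.2 p.1, f3 p.2.2 p.1 p.2.1)) := by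
  have h2 : (2 : F) = 0 := by
    have h := FiniteField.cast_card_eq_zero F
    rw [hF] at h
    push_cast at h
    exact pow_eq_zero_iff (by rintro rfl; simp at hm) |>.1 h
  rw [← Finite.injective_iff_bijective]
  rintro ⟨x', y', z'⟩ ⟨X, Y, Z⟩ h
  simp only [Prod.mk.injEq] at h
  obtain ⟨a, b, c⟩ := h
  obtain ⟨hx, hy, hz⟩ := inj0 h2 (fun w hw => no_root m hm hF w hw h2)
    (x' - X) (y' - Y) (z' - Z) X Y Z (by simpa using a) (by simpa using b) (by simpa using c)
  rw [sub_eq_zero] at hx hy hz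
  subst hx hy hz
  rfl
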